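/- Let α be a partition with all parts at least 2 and overlapping partition p, and let ν ∈ [α, (|α|−p_1, p_1)] be a partition with ℓ(ν) = ℓ(α) − k for some 1 ≤ k ≤ ℓ(α)−2, satisfying ν_i ≤ Σ_{j=i}^{ℓ(α)} α_j − p_i for all 1 ≤ i ≤ ℓ(α). Then c_{R_α^p}^ν > 0, i.e. there exists an LR tableau of shape R_α^p and content ν. -/

import Mathlib

namespace RibbonSupport

/-- A partition: a weakly decreasing list of positive integers. -/
def IsPartition (a : List ℕ) : Prop := a.Pairwise (· ≥ ·) ∧ ∀ x ∈ a, 0 < x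

/-- All parts of the list are at least `m`. -/
def PartsGE (a : List ℕ) (m : ℕ) : Prop := ∀ x ∈ a, m ≤ x

/-- Dominance order `lam ⪯ mu` on partitions of the same size. -/
def DomLE (lam mu : List ℕ) : Prop :=
  lam.sum = mu.sum ∧ ∀ i, (lam.take i).sum ≤ (mu.take i).sum

/-- The number of nonzero parts. -/
def lenp (p : List ℕ) : ℕ := p.countP (fun x => decide (x ≠ 0))

/-- `p` is an overlapping partition for the monotone ribbon with row lengths `a`:
`p` has the same length as `a`, its last entry is `0`, and consecutive entries
decrease by `0` or `1`. -/
def IsOverlapSeq (a p : List ℕ) : Prop :=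
  p.length = a.length ∧ p.getD (a.length - 1) 0 = 0 ∧
    ∀ i, i + 1 < a.length →
      p.getD i 0 = p.getD (i + 1) 0 ∨ p.getD i 0 = p.getD (i + 1) 0 + 1

/-- Rows `i` and `i+1` (0-based, top to bottom) of `R_a^p` overlap
(share exactly one column) exactly when `p_i = p_{i+1} + 1`. -/
def ovOf (p : List ℕ) : ℕ → Bool := fun i => decide (p.getD i 0 = p.getD (i + 1) 0 + 1)

def rowOffset (a : List ℕ) (i : ℕ) : ℕ := (a.take i).sum

/-- `w` is the reading word (rows right-to-left, top to bottom) of a semistandard filling of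
the ribbon with row lengths `a` (top to bottom) in which consecutive rows `i`, `i+1` share
exactly one column when `ov i = true` and no column otherwise.  Semistandardness amounts to:
within each row block the word is weakly decreasing (rows weakly increase left to right), and
at each overlapping gap the word strictly increases (columns strictly increase downwards). -/
def IsRibbonWord (a : List ℕ) (ov : ℕ → Bool) (w : List ℕ) : Prop :=
  w.length = a.sum ∧
  (∀ i j, i < a.length → j + 1 < a.getD i 0 →
    w.getD (rowOffset a i + j + 1) 0 ≤ w.getD (rowOffset a i + j) 0) ∧
  (∀ i, i + 1 < a.length → ov i = true →
    w.getD (rowOffset a (i + 1) - 1) 0 < w.getD (rowOffset a (i + 1)) 0)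

/-- Yamanouchi (lattice) word: each prefix has at least as many letters `j` as `j+1`. -/
def IsYam (w : List ℕ) : Prop := ∀ k j, (w.take k).count (j + 2) ≤ (w.take k).count (j + 1)

/-- The word `w` has content `nu` (and only positive letters). -/
def HasContent (w : List ℕ) (nu : List ℕ) : Prop :=
  (∀ j, w.count (j + 1) = nu.getD j 0) ∧ w.count 0 = 0

/-- There is an LR filling of the ribbon `(a, ov)` with content `nu`. -/
def InSupportOv (a : List ℕ) (ov : ℕ → Bool) (nu : List ℕ) : Prop :=
  ∃ w : List ℕ, IsRibbonWord a ov w ∧ IsYam w ∧ HasContent w nu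

/-- `nu` is in the Schur support of the monotone ribbon `R_a^p`. -/
def InSupport (a p nu : List ℕ) : Prop := InSupportOv a (ovOf p) nu

/-- `nu` is in the Schur support of the connected ribbon `R_a`. -/
def InSupportConn (a nu : List ℕ) : Prop := InSupportOv a (fun _ => true) nu

/-- `nu` belongs to the Schur interval `[a, (|a| - p₁, p₁)]` in dominance order. -/
def InInterval (a p nu : List ℕ) : Prop :=
  DomLE a nu ∧ DomLE nu [a.sum - p.getD 0 0, p.getD 0 0]

/-- The Schur support of `R_a^p`, as a set of partitions. -/
def SupportSet (a p : List ℕ) : Set (List ℕ) := {nu | IsPartition nu ∧ InSupport a p nu}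

/-- The Schur interval of `R_a^p`, as a set of partitions. -/
def IntervalSet (a p : List ℕ) : Set (List ℕ) := {nu | IsPartition nu ∧ InInterval a p nu}

/-- `R_a^p` has full Schur support. -/
def FullSupport (a p : List ℕ) : Prop := SupportSet a p = IntervalSet a p

/-- The Schur support of the connected ribbon `R_a`, as a set of partitions. -/
def SupportSetConn (a : List ℕ) : Set (List ℕ) := {nu | IsPartition nu ∧ InSupportConn a nu}

/-- `ϱ_i` (1-based `i`): `Σ_{q=i+1}^{ℓ(a)} a_q − p_{i+1} + 1`. -/
def rho (a p : List ℕ) (i : ℕ) : ℕ := (a.drop i).sum + 1 - p.getD i 0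

/-- Entry `j` (1-based) of the `i`-witness vector: `[ϱ_i − a_j]₊`. -/
def wit (a p : List ℕ) (i j : ℕ) : ℕ := rho a p i - a.getD (j - 1) 0

/-- Size of the `i`-witness vector. -/
def witSize (a p : List ℕ) (i : ℕ) : ℕ := ∑ j ∈ Finset.Icc 1 i, wit a p i j

/-! ### Tableaux -/

/-- Cells (0-based `(row, column)`) of the Young diagram of `lam`. -/
def cells (lam : List ℕ) : Finset (ℕ × ℕ) :=
  (Finset.range lam.length ×ˢ Finset.range (lam.sum + 1)).filter
    (fun x => x.2 < lam.getD x.1 0)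

/-- `T` is a semistandard Young tableau of shape `lam` and content `al`
(normalized to vanish off the diagram). -/
def IsTab (lam al : List ℕ) (T : ℕ × ℕ → ℕ) : Prop :=
  (∀ x, x ∉ cells lam → T x = 0) ∧
  (∀ x ∈ cells lam, 1 ≤ T x) ∧
  (∀ i c, (i, c + 1) ∈ cells lam → T (i, c) ≤ T (i, c + 1)) ∧
  (∀ i c, (i + 1, c) ∈ cells lam → T (i, c) < T (i + 1, c)) ∧
  (∀ k, ((cells lam).filter (fun x => T x = k + 1)).card = al.getD k 0)

/-- Standardization of a tableau: entries are renumbered `1, …, N` in increasing order of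
value, entries of equal value being numbered from southwest to northeast (by column). -/
def stdz (lam : List ℕ) (T : ℕ × ℕ → ℕ) : ℕ × ℕ → ℕ := fun x =>
  if x ∈ cells lam then
    ((cells lam).filter (fun y => T y < T x ∨ (T y = T x ∧ y.2 < x.2))).card + 1
  else 0

/-- `n` is a descent of the standard tableau `U`: the entry `n+1` lies in a strictly
lower row than the entry `n`. -/
def IsDescent (lam : List ℕ) (U : ℕ × ℕ → ℕ) (n : ℕ) : Prop :=
  ∃ x ∈ cells lam, ∃ y ∈ cells lam, U x = n ∧ U y = n + 1 ∧ x.1 < y.1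

/-- `S(al)`: the set of proper partial sums of the composition `al`. -/
def Sset (al : List ℕ) : Set ℕ := {n | ∃ k, 0 < k ∧ k < al.length ∧ n = (al.take k).sum}

/-- `s ∈ D(T)`: some entry `s+1` of `T` lies in a strictly lower row than some entry `s`. -/
def TabDescent (lam : List ℕ) (T : ℕ × ℕ → ℕ) (s : ℕ) : Prop :=
  ∃ x ∈ cells lam, ∃ y ∈ cells lam, T x = s ∧ T y = s + 1 ∧ x.1 < y.1

/-- The word `w_{T̂}` of `T`: its `u`-th letter (1-based) is the 1-based row index of the
entry `u` of the standardization `T̂` of `T`. -/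
def wordOf (lam : List ℕ) (T : ℕ × ℕ → ℕ) : List ℕ :=
  (List.range lam.sum).map fun n =>
    ∑ x ∈ (cells lam).filter (fun x => stdz lam T x = n + 1), (x.1 + 1)

/-- `j ∈ {2, …, ℓ(al)}` is a critical number of `T ∈ Tab(lam, al)`:
`w_{α_1+⋯+α_{j-1}} = w_{α_1+⋯+α_{j-1}+1}` in the word of `T`. -/
def CriticalNum (lam al : List ℕ) (T : ℕ × ℕ → ℕ) (j : ℕ) : Prop :=
  2 ≤ j ∧ j ≤ al.length ∧
    (wordOf lam T).getD ((al.take (j - 1)).sum - 1) 0 =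
      (wordOf lam T).getD ((al.take (j - 1)).sum) 0

/-- `j ∈ {2, …, ℓ(al)}` is a negligible critical number of `T`:
`w_{α_1+⋯+α_{j-1}} > w_{α_1+⋯+α_{j-1}+1}` in the word of `T`. -/
def NegligibleNum (lam al : List ℕ) (T : ℕ × ℕ → ℕ) (j : ℕ) : Prop :=
  2 ≤ j ∧ j ≤ al.length ∧
    (wordOf lam T).getD ((al.take (j - 1)).sum) 0 <
      (wordOf lam T).getD ((al.take (j - 1)).sum - 1) 0

/-- The overlapping partition of the ribbon encoded by its gap pattern `b`
(`b j = true` iff rows `j` and `j+1`, 0-based, overlap). -/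
def povOf (b : List Bool) : List ℕ :=
  (List.range (b.length + 1)).map fun i => (b.drop i).count true

/-! ### Connected ribbons with rows in arbitrary order -/

/-- Starting column (0-based) of row `i` of the connected ribbon with row lengths `b`. -/
def startConn (b : List ℕ) (i : ℕ) : ℕ := (b.drop (i + 1)).sum + (i + 1) - b.length

/-- Number of columns of the connected ribbon with row lengths `b`. -/
def ncols (b : List ℕ) : ℕ := b.sum + 1 - b.length

/-- Length of column `c` of the connected ribbon with row lengths `b`. -/
def colLen (b : List ℕ) (c : ℕ) : ℕ :=
  ((Finset.range b.length).filter
    (fun i => startConn b i ≤ c ∧ c < startConn b i + b.getD i 0)).card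

/-- Deletion rank of row `j`: the number of rows deleted strictly before row `j` when one
repeatedly deletes a longest remaining row in highest (most northern) position. -/
def delRank (g : List ℕ) (j : ℕ) : ℕ :=
  ((Finset.range g.length).filter
    (fun j' => g.getD j 0 < g.getD j' 0 ∨ (g.getD j' 0 = g.getD j 0 ∧ j' < j))).card

/-- The overlapping partition of the connected ribbon with row lengths `g`:
its `(d+1)`-st entry is the number of length-two columns of the ribbon remaining
after deleting `d` rows as above, i.e. the number of adjacent pairs of surviving rows. -/
def ppiList (g : List ℕ) : List ℕ :=
  (List.range g.length).map fun d =>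
    ((Finset.range (g.length - 1)).filter
      (fun j => d ≤ delRank g j ∧ d ≤ delRank g (j + 1))).card

/-!
Fill the ribbon from the bottom: its last and shortest row, of `m` boxes, takes a horizontal strip
of `m` boxes off `ν`, and what is left of `ν` must satisfy the hypotheses for the ribbon without
that row. Taking the strip as low as possible preserves the dominance condition, while a row
condition can only fail for the shorter ribbon at a row of `ν` that is too long by some excess `c`.
As all parts are at least two, this happens for at most one row, and reserving `c` boxes of the
strip for it and the rows above it leaves the other conditions intact. To make the word increase at
an overlap, the induction also bounds the last letter of the word of the shorter ribbon.
-/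

/-! ### Lists -/

theorem antitone_getD_of_pairwise_ge {l : List ℕ} (hl : l.Pairwise (· ≥ ·)) :
    Antitone (l.getD · 0) := by
  intro i j hij
  rcases hij.eq_or_lt with rfl | hlt
  · exact le_rfl
  rcases Nat.lt_or_ge j l.length with hj | hj
  · simpa only [List.getD_eq_getElem _ _ hj, List.getD_eq_getElem _ _ (hlt.trans hj)] using
      List.pairwise_iff_getElem.1 hl i j _ hj hlt
  · simp only [List.getD_eq_default _ _ hj, Nat.zero_le]

theorem getD_mem {X : Type*} {l : List X} {i : ℕ} (hi : i < l.length) (x : X) :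
    l.getD i x ∈ l := by
  rw [List.getD_eq_getElem _ _ hi]
  exact List.getElem_mem hi

theorem exists_getD_eq_of_mem {X : Type*} {l : List X} {x : X} (hx : x ∈ l) (y : X) :
    ∃ i < l.length, l.getD i y = x := by
  obtain ⟨i, hi, rfl⟩ := List.getElem_of_mem hx
  exact ⟨i, hi, List.getD_eq_getElem _ _ hi⟩

theorem sum_range_getD {M : Type*} [AddCommMonoid M] :
    ∀ (l : List M) {n : ℕ}, l.length ≤ n → ∑ j ∈ Finset.range n, l.getD j 0 = l.sum
  | [], _, _ => by simp
  | x :: l, n + 1, h => by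
    rw [Finset.sum_range_succ', add_comm, List.sum_cons,
      ← sum_range_getD l (Nat.le_of_succ_le_succ h)]
    simp only [List.getD_cons_zero, List.getD_cons_succ]

theorem sum_Ico_getD {M : Type*} [AddCommMonoid M] (l : List M) {n : ℕ} (h : l.length ≤ n)
    (i : ℕ) : ∑ j ∈ Finset.Ico i n, l.getD j 0 = (l.drop i).sum := by
  rw [Finset.sum_Ico_eq_sum_range, ← sum_range_getD (l.drop i) (n := n - i) (by grind)]
  simp [List.getD_eq_getElem?_getD]

theorem sum_drop_eq_getD_add (l : List ℕ) (i : ℕ) :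
    (l.drop i).sum = l.getD i 0 + (l.drop (i + 1)).sum := by
  rcases Nat.lt_or_ge i l.length with h | h
  · rw [List.drop_eq_getElem_cons h, List.sum_cons, List.getD_eq_getElem _ _ h]
  · simp [List.drop_of_length_le h, List.drop_of_length_le (Nat.le_succ_of_le h), h]

theorem sum_take_lt_sum {l : List ℕ} (hl : ∀ x ∈ l, 0 < x) {i : ℕ} (hi : i < l.length) :
    (l.take i).sum < l.sum := by
  have hsplit := List.sum_take_add_sum_drop l i
  have hdrop := sum_drop_eq_getD_add l i
  have hpos := hl _ (getD_mem hi 0)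
  omega

theorem apply_le_sum_Ico (f : ℕ → ℕ) {i n : ℕ} (hi : i < n) : f i ≤ ∑ j ∈ Finset.Ico i n, f j :=
  Finset.single_le_sum (fun _ _ => Nat.zero_le _) (Finset.left_mem_Ico.2 hi)

/-! ### Overlaps -/

/-- The entry `p_{i+1}` of the overlapping partition of a ribbon with `n` rows and gap pattern
`ov`: the number of overlaps between consecutive rows among the rows `i, …, n - 1` (0-based). -/
def overlapCount (ov : ℕ → Bool) (n i : ℕ) : ℕ := ∑ j ∈ Finset.Ico i (n - 1), (ov j).toNat

theorem overlapCount_le (ov : ℕ → Bool) (n i : ℕ) : overlapCount ov n i ≤ n - 1 - i := by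
  simpa [overlapCount] using
    Finset.sum_le_card_nsmul (Finset.Ico i (n - 1)) _ 1 fun j _ => Bool.toNat_le (ov j)

theorem overlapCount_succ (ov : ℕ → Bool) {n i : ℕ} (hi : i < n) :
    overlapCount ov (n + 1) i = overlapCount ov n i + (ov (n - 1)).toNat := by
  obtain ⟨k, rfl⟩ : ∃ k, n = k + 1 := ⟨n - 1, by omega⟩
  exact Finset.sum_Ico_succ_top (by omega) _

theorem overlapCount_le_add (ov : ℕ → Bool) (n : ℕ) {i j : ℕ} (hij : i ≤ j) :
    overlapCount ov n i ≤ overlapCount ov n j + (j - i) := by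
  rcases Nat.lt_or_ge j n with hj | hj
  · have hcard : ∑ k ∈ Finset.Ico i j, (ov k).toNat ≤ j - i := by
      simpa using Finset.sum_le_card_nsmul (Finset.Ico i j) _ 1 fun k _ => Bool.toNat_le (ov k)
    have hsplit := Finset.sum_Ico_consecutive (fun k => (ov k).toNat) hij (show j ≤ n - 1 by omega)
    simp only [overlapCount]
    omega
  · have := overlapCount_le ov n i
    omega

theorem IsOverlapSeq.getD_eq_overlapCount {a p : List ℕ} (hp : IsOverlapSeq a p) {i : ℕ}
    (hi : i < a.length) : p.getD i 0 = overlapCount (ovOf p) a.length i := by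
  obtain ⟨-, hlast, hstep⟩ := hp
  induction Nat.le_sub_one_of_lt hi using Nat.decreasingInduction with
  | self => rw [hlast, overlapCount, Finset.Ico_self, Finset.sum_empty]
  | of_succ i hlt ih =>
    have hsplit := Finset.sum_eq_sum_Ico_succ_bot hlt fun j => (ovOf p j).toNat
    simp only [overlapCount] at ih ⊢
    rcases hstep i (by omega) with h | h
    · have hov : ovOf p i = false := decide_eq_false (by omega)
      rw [hov, Bool.toNat_false] at hsplit
      omega
    · have hov : ovOf p i = true := decide_eq_true h
      rw [hov, Bool.toNat_true] at hsplit
      omega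

theorem add_two_mul_overlapCount_le {b : List ℕ} {m : ℕ} (hm : 2 ≤ m) (hb : ∀ x ∈ b, m ≤ x)
    (ov : ℕ → Bool) {i : ℕ} (hi : i < b.length) :
    m + 2 * overlapCount ov b.length i ≤ (b.drop i).sum := by
  have hrest := List.card_nsmul_le_sum (b.drop (i + 1)) 2 fun x hx =>
    hm.trans (hb x (List.mem_of_mem_drop hx))
  have hrow := hb _ (getD_mem hi 0)
  have hsplit := sum_drop_eq_getD_add b i
  have hcount := overlapCount_le ov b.length i
  simp only [List.length_drop, smul_eq_mul] at hrest
  omega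

theorem overlapCount_le_sum_drop_add {b : List ℕ} {m : ℕ} (hm : 2 ≤ m) (hb : ∀ x ∈ b, m ≤ x)
    (ov : ℕ → Bool) {i j : ℕ} (hij : i < j) (hj : j ≤ b.length) :
    overlapCount ov b.length i ≤ (b.drop j).sum + (j - i - 1) := by
  rcases hj.eq_or_lt with rfl | hlt
  · have := overlapCount_le ov b.length i
    omega
  · have hstep := overlapCount_le_add ov b.length hij.le
    have hroom := add_two_mul_overlapCount_le hm hb ov hlt
    omega

/-! ### Contents fitting a ribbon -/

/-- The hypotheses of the theorem on the content `ν` (0-based) of a ribbon with row lengths `a`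
and gap pattern `ov`, with the dominance condition `a ⪯ ν` expressed by tail sums. -/
structure Fits (a : List ℕ) (ov : ℕ → Bool) (ν : ℕ → ℕ) : Prop where
  antitone : Antitone ν
  eq_zero : ν a.length = 0
  sum_eq : ∑ j ∈ Finset.Ico 0 a.length, ν j = a.sum
  tail_le : ∀ i ≤ a.length, ∑ j ∈ Finset.Ico i a.length, ν j ≤ (a.drop i).sum
  row_le : ∀ i < a.length, ν i + overlapCount ov a.length i ≤ (a.drop i).sum

/-- The extra condition on the content `ν` under which an LR word of the ribbon can be chosen
with last letter at most `q + 1`. It is void when `ν (q + 1) = 0`, as then no letter exceeds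
`q + 1`; otherwise the row condition at `q + 1` is tightened as if a further row overlapped the
last one. -/
structure LastLetterCond (a : List ℕ) (ov : ℕ → Bool) (ν : ℕ → ℕ) (q : ℕ) : Prop where
  eq_zero : ν (q + 2) = 0
  lt : 0 < ν (q + 1) → ν (q + 1) < ν q
  row_lt : 0 < ν (q + 1) →
    ν (q + 1) + overlapCount ov a.length (q + 1) < (a.drop (q + 1)).sum

theorem sum_drop_append_singleton (b : List ℕ) (m : ℕ) {i : ℕ} (hi : i ≤ b.length) :
    ((b ++ [m]).drop i).sum = (b.drop i).sum + m := by
  simp [List.drop_append_of_le_length hi]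

namespace Fits

variable {b : List ℕ} {m : ℕ} {ov : ℕ → Bool} {ν : ℕ → ℕ} {i j : ℕ}

theorem eq_zero_of_le {a : List ℕ} (h : Fits a ov ν) (hi : a.length ≤ i) : ν i = 0 :=
  Nat.eq_zero_of_le_zero (h.eq_zero ▸ h.antitone hi)

theorem tail_le_add (h : Fits (b ++ [m]) ov ν) (hi : i ≤ b.length) :
    ∑ j ∈ Finset.Ico i (b.length + 1), ν j ≤ (b.drop i).sum + m := by
  have := h.tail_le i (by simp; omega)
  rwa [sum_drop_append_singleton b m hi, List.length_append, List.length_singleton] at this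

theorem row_le_add (h : Fits (b ++ [m]) ov ν) (hi : i < b.length) :
    ν i + overlapCount ov b.length i + (ov (b.length - 1)).toNat ≤ (b.drop i).sum + m := by
  have := h.row_le i (by simp; omega)
  rwa [sum_drop_append_singleton b m hi.le, List.length_append, List.length_singleton,
    overlapCount_succ ov hi, ← add_assoc] at this

theorem tail_succ_le (h : Fits (b ++ [m]) ov ν) (hb : ∀ x ∈ b, m ≤ x) (hi : i ≤ b.length) :
    ∑ j ∈ Finset.Ico (i + 1) (b.length + 1), ν j ≤ (b.drop i).sum := by
  rcases hi.eq_or_lt with rfl | hlt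
  · simp
  · have htail := h.tail_le_add (i := i + 1) (by omega)
    have hsplit := sum_drop_eq_getD_add b i
    have hrow := hb _ (getD_mem hlt 0)
    omega

theorem le_apply_zero (h : Fits (b ++ [m]) ov ν) (hb : ∀ x ∈ b, m ≤ x) : m ≤ ν 0 := by
  have htail := h.tail_succ_le hb (Nat.zero_le _)
  have hsplit := Finset.sum_eq_sum_Ico_succ_bot (Nat.succ_pos b.length) ν
  have hsum := h.sum_eq
  simp only [List.length_append, List.length_singleton, List.sum_append, List.sum_singleton]
    at hsum
  simp only [List.drop_zero, zero_add] at htail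
  simp only [Nat.succ_eq_add_one, zero_add] at hsplit
  omega

theorem exists_last_row (h : Fits (b ++ [m]) ov ν) (h0 : 0 < ν 0) :
    ∃ r, 0 < ν r ∧ ν (r + 1) = 0 := by
  have hex : ∃ i, ν (i + 1) = 0 := ⟨b.length, h.eq_zero_of_le (by simp)⟩
  refine ⟨Nat.find hex, ?_, Nat.find_spec hex⟩
  rcases hr : Nat.find hex with _ | r
  · exact h0
  · exact Nat.pos_of_ne_zero (Nat.find_min hex (hr ▸ Nat.lt_succ_self r))

theorem last_row_pos (h : Fits (b ++ [m]) ov ν) (hne : b ≠ []) (hov : ov (b.length - 1) = true)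
    {r : ℕ} (hr : ν (r + 1) = 0) : 0 < r := by
  by_contra hr0
  obtain rfl : r = 0 := by omega
  have hrow := h.row_le_add (List.length_pos_iff.2 hne)
  have hsum := h.sum_eq
  have hsplit := Finset.sum_eq_sum_Ico_succ_bot (Nat.succ_pos b.length) ν
  have hrest : ∑ j ∈ Finset.Ico 1 (b.length + 1), ν j = 0 :=
    Finset.sum_eq_zero fun j hj =>
      Nat.eq_zero_of_le_zero (hr ▸ h.antitone (Finset.mem_Ico.1 hj).1)
  simp only [hov, Bool.toNat_true, List.drop_zero] at hrow
  simp only [List.length_append, List.length_singleton, List.sum_append, List.sum_singleton]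
    at hsum
  simp only [Nat.succ_eq_add_one, zero_add] at hsplit
  omega

end Fits

/-! ### Tight rows -/

/-- Row `i` of `ν` violates the row condition of `Fits` for the ribbon with rows `b`, so that any
further row of the ribbon has to take boxes from it. -/
abbrev IsTight (b : List ℕ) (ov : ℕ → Bool) (ν : ℕ → ℕ) (i : ℕ) : Prop :=
  (b.drop i).sum < ν i + overlapCount ov b.length i

namespace Fits

variable {b : List ℕ} {m : ℕ} {ov : ℕ → Bool} {ν : ℕ → ℕ} {i j : ℕ}

theorem tail_add_le (h : Fits (b ++ [m]) ov ν) (hij : i < j) (hj : j ≤ b.length)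
    (hpos : 0 < ν j) :
    ∑ k ∈ Finset.Ico j (b.length + 1), ν k + ν i + (j - i - 1) ≤ (b.drop i).sum + m := by
  have htail := h.tail_le_add (hij.le.trans hj)
  have hsplit := Finset.sum_Ico_consecutive ν hij.le (show j ≤ b.length + 1 by omega)
  have hbot := Finset.sum_eq_sum_Ico_succ_bot hij ν
  have hmid : j - (i + 1) ≤ ∑ k ∈ Finset.Ico (i + 1) j, ν k := by
    simpa using Finset.card_nsmul_le_sum (Finset.Ico (i + 1) j) ν 1 fun k hk =>
      hpos.trans_le (h.antitone (Finset.mem_Ico.1 hk).2.le)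
  omega

theorem not_isTight_of_isTight_of_lt (h : Fits (b ++ [m]) ov ν) (hm : 2 ≤ m)
    (hb : ∀ x ∈ b, m ≤ x) (hi : IsTight b ov ν i) (hij : i < j) (hj : j < b.length) :
    ¬IsTight b ov ν j := by
  rw [IsTight, not_lt]
  have hroom := add_two_mul_overlapCount_le hm hb ov hj
  rcases Nat.eq_zero_or_pos (ν j) with hzero | hpos
  · omega
  have htail := h.tail_add_le hij hj.le hpos
  have hrow := apply_le_sum_Ico ν (show j < b.length + 1 by omega)
  have hcount := overlapCount_le_add ov b.length hij.le
  omega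

theorem tail_add_excess_le (h : Fits (b ++ [m]) ov ν) (hm : 2 ≤ m) (hb : ∀ x ∈ b, m ≤ x)
    (hij : i < j) (hj : j ≤ b.length) (hpos : 0 < ν j) :
    ∑ k ∈ Finset.Ico j (b.length + 1), ν k + (ν i + overlapCount ov b.length i)
      ≤ (b.drop j).sum + m + (b.drop i).sum := by
  have htail := h.tail_add_le hij hj hpos
  have hcount := overlapCount_le_sum_drop_add hm hb ov hij hj
  omega

theorem apply_succ_add_excess_le (h : Fits (b ++ [m]) ov ν) (hm : 2 ≤ m) (hb : ∀ x ∈ b, m ≤ x)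
    (hi : i < b.length) (hpos : 0 < ν (i + 1))
    (htight : IsTight b ov ν i) :
    ν (i + 1) + (ν i + overlapCount ov b.length i - (b.drop i).sum) ≤ ν i := by
  have htail := h.tail_add_le (show i < i + 1 by omega) hi hpos
  have hrow := apply_le_sum_Ico ν (show i + 1 < b.length + 1 by omega)
  have hroom := add_two_mul_overlapCount_le hm hb ov hi
  omega

end Fits

/-! ### Cuts -/

/-- The number of boxes that the last row of the ribbon may take from the rows `≥ i` of `ν`, if
`c` of its `m` boxes are reserved for the rows `≤ t`. -/
def cap (m t c i : ℕ) : ℕ := if i ≤ t then m else m - c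

/-- Reserving `c` of the `m` boxes of the last row of the ribbon with rows `b ++ [m]` for the
rows `≤ t` of `ν` leaves a content that fits the ribbon with rows `b`. If its last two rows overlap,
`add_le` and `last_row_le` keep one box to spare, for the strict increase at the overlap. -/
structure IsCut (b : List ℕ) (m : ℕ) (ov : ℕ → Bool) (ν : ℕ → ℕ) (t c : ℕ) : Prop where
  add_le : c + (ov (b.length - 1)).toNat ≤ m
  room : ν (t + 1) + c ≤ ν t
  row_le : ∀ i < b.length, 0 < ν (i + 1) →
    ν i + overlapCount ov b.length i ≤ (b.drop i).sum + if i = t then c else 0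
  last_row_le : ∀ i < b.length, ν (i + 1) = 0 →
    ν i + overlapCount ov b.length i + (ov (b.length - 1)).toNat ≤ (b.drop i).sum + cap m t c i
  tail_le : ∀ i ≤ b.length, 0 < ν i →
    ∑ j ∈ Finset.Ico i (b.length + 1), ν j ≤ (b.drop i).sum + cap m t c i

section Cut

variable {b : List ℕ} {m : ℕ} {ov : ℕ → Bool} {ν : ℕ → ℕ} {q t c : ℕ}

theorem Fits.isCut_of_isTight (h : Fits (b ++ [m]) ov ν) (hm : 2 ≤ m) (hb : ∀ x ∈ b, m ≤ x)
    (ht : t < b.length) (hpos : 0 < ν (t + 1))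
    (htight : IsTight b ov ν t) :
    IsCut b m ov ν t (ν t + overlapCount ov b.length t - (b.drop t).sum) where
  add_le := by
    have := h.row_le_add ht
    omega
  room := h.apply_succ_add_excess_le hm hb ht hpos htight
  row_le i hi _ := by
    rcases lt_trichotomy i t with hlt | rfl | hgt
    · have hloose : ¬IsTight b ov ν i := fun hi' =>
        h.not_isTight_of_isTight_of_lt hm hb hi' hlt ht htight
      omega
    · simp only [↓reduceIte]
      omega
    · have := h.not_isTight_of_isTight_of_lt hm hb htight hgt hi
      omega
  last_row_le i hi hzero := by
    have hlt : t < i := by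
      by_contra hcon
      have := h.antitone (show i + 1 ≤ t + 1 by omega)
      omega
    have hloose := h.not_isTight_of_isTight_of_lt hm hb htight hlt hi
    have hrow := h.row_le_add ht
    simp only [cap, Nat.not_le.2 hlt, ↓reduceIte]
    omega
  tail_le i hi hpos' := by
    rcases Nat.lt_or_ge t i with hlt | hge
    · have := h.tail_add_excess_le hm hb hlt hi hpos'
      simp only [cap, Nat.not_le.2 hlt, ↓reduceIte]
      omega
    · simpa only [cap, hge, ↓reduceIte] using h.tail_le_add hi

theorem LastLetterCond.row_lt_add (hq : LastLetterCond (b ++ [m]) ov ν q) (hlt : q + 1 < b.length)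
    (hpos : 0 < ν (q + 1)) :
    ν (q + 1) + overlapCount ov b.length (q + 1) + (ov (b.length - 1)).toNat
      < (b.drop (q + 1)).sum + m := by
  have := hq.row_lt hpos
  rwa [sum_drop_append_singleton b m hlt.le, List.length_append, List.length_singleton,
    overlapCount_succ ov hlt, ← add_assoc] at this

theorem LastLetterCond.tail_lt_add (hq : LastLetterCond (b ++ [m]) ov ν q)
    (hν : Antitone ν) (hle : q + 1 ≤ b.length) (hpos : 0 < ν (q + 1)) :
    ∑ j ∈ Finset.Ico (q + 1) (b.length + 1), ν j < (b.drop (q + 1)).sum + m := by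
  have hrow := hq.row_lt hpos
  rw [sum_drop_append_singleton b m hle] at hrow
  have hrest : ∑ j ∈ Finset.Ico (q + 2) (b.length + 1), ν j = 0 :=
    Finset.sum_eq_zero fun j hj =>
      Nat.eq_zero_of_le_zero (hq.eq_zero ▸ hν (Finset.mem_Ico.1 hj).1)
  rw [Finset.sum_eq_sum_Ico_succ_bot (by omega), hrest]
  omega

theorem Fits.isCut_of_forall_not_isTight (h : Fits (b ++ [m]) ov ν) (hm : 2 ≤ m)
    (hb : ∀ x ∈ b, m ≤ x) (hq : LastLetterCond (b ++ [m]) ov ν q)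
    (hloose : ∀ i < b.length, 0 < ν (i + 1) → ¬IsTight b ov ν i) :
    IsCut b m ov ν q (if 0 < ν (q + 1) then 1 else 0) where
  add_le := by
    have := Bool.toNat_le (ov (b.length - 1))
    split <;> omega
  room := by
    have := h.antitone (Nat.le_succ q)
    split
    · exact hq.lt ‹_›
    · exact this
  row_le i hi hpos := (not_lt.1 (hloose i hi hpos)).trans (Nat.le_add_right _ _)
  last_row_le i hi hzero := by
    have hrow := h.row_le_add hi
    simp only [cap]
    split_ifs with hiq hpos
    · exact hrow
    · rcases (show q + 1 ≤ i by omega).eq_or_lt with rfl | hlt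
      · have := hq.row_lt_add hi hpos
        omega
      · have hνi : ν i = 0 := Nat.eq_zero_of_le_zero (hq.eq_zero ▸ h.antitone hlt)
        have hroom := add_two_mul_overlapCount_le hm hb ov hi
        have := Bool.toNat_le (ov (b.length - 1))
        omega
    · exact hrow
  tail_le i hi hposi := by
    have htail := h.tail_le_add hi
    simp only [cap]
    split_ifs with hiq hpos
    · exact htail
    · obtain rfl : i = q + 1 := by
        by_contra hne
        have := h.antitone (show q + 2 ≤ i by omega)
        have := hq.eq_zero
        omega
      have := hq.tail_lt_add h.antitone hi hpos
      omega
    · exact htail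

theorem Fits.exists_isCut (h : Fits (b ++ [m]) ov ν) (hm : 2 ≤ m) (hb : ∀ x ∈ b, m ≤ x)
    (hq : LastLetterCond (b ++ [m]) ov ν q) :
    ∃ t c, IsCut b m ov ν t c ∧ (0 < ν (q + 1) → t ≤ q ∧ 0 < c) := by
  by_cases htight : ∃ t < b.length, 0 < ν (t + 1) ∧ IsTight b ov ν t
  · obtain ⟨t, ht, hpos, htight⟩ := htight
    refine ⟨t, _, h.isCut_of_isTight hm hb ht hpos htight, fun _ => ⟨?_, by omega⟩⟩
    by_contra hcon
    have := h.antitone (show q + 2 ≤ t + 1 by omega)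
    have := hq.eq_zero
    omega
  · have hloose : ∀ i < b.length, 0 < ν (i + 1) → ¬IsTight b ov ν i := fun i hi hpos hi' =>
      htight ⟨i, hi, hpos, hi'⟩
    exact ⟨q, _, h.isCut_of_forall_not_isTight hm hb hq hloose, fun hpos => by simp [hpos]⟩

end Cut

/-! ### Horizontal strips -/

/-- A horizontal strip of `m` boxes in `ν`, given by the number `e i` of its boxes in the rows
`≥ i`: in row `i` it has `e i - e (i + 1)` boxes, at most `ν i - ν (i + 1)` by `gap`. -/
structure IsStrip (ν e : ℕ → ℕ) (m : ℕ) : Prop where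
  zero : e 0 = m
  antitone : Antitone e
  gap : ∀ i, e i + ν (i + 1) ≤ e (i + 1) + ν i
  le : ∀ i, e i ≤ ν i

/-- The content left of `ν` after removal of the strip `e`. -/
def residual (ν e : ℕ → ℕ) (i : ℕ) : ℕ := ν i + e (i + 1) - e i

namespace IsStrip

variable {ν e : ℕ → ℕ} {m : ℕ}

theorem residual_add (he : IsStrip ν e m) (i : ℕ) : residual ν e i + e i = ν i + e (i + 1) :=
  Nat.sub_add_cancel ((he.le i).trans (Nat.le_add_right _ _))

theorem le_residual (he : IsStrip ν e m) (i : ℕ) : ν (i + 1) ≤ residual ν e i := by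
  have := he.residual_add i
  have := he.gap i
  omega

theorem residual_le (he : IsStrip ν e m) (i : ℕ) : residual ν e i ≤ ν i := by
  have := he.residual_add i
  have := he.antitone (Nat.le_add_right i 1)
  omega

theorem antitone_residual (he : IsStrip ν e m) : Antitone (residual ν e) :=
  antitone_nat_of_succ_le fun i => (he.residual_le (i + 1)).trans (he.le_residual i)

theorem sum_residual_add (he : IsStrip ν e m) {i n : ℕ} (hin : i ≤ n) :
    ∑ j ∈ Finset.Ico i n, residual ν e j + e i = ∑ j ∈ Finset.Ico i n, ν j + e n := by
  induction n, hin using Nat.le_induction with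
  | base => simp
  | succ n hin ih =>
    have := he.residual_add n
    rw [Finset.sum_Ico_succ_top hin, Finset.sum_Ico_succ_top hin]
    omega

end IsStrip

section CutStrip

variable {b : List ℕ} {m : ℕ} {ov : ℕ → Bool} {ν : ℕ → ℕ} {q t c : ℕ}

theorem antitone_cap (m t c : ℕ) : Antitone (cap m t c) := by
  intro i j hij
  simp only [cap]
  split_ifs <;> omega

/-- The strip with as many boxes in the low rows of `ν` as `cap` allows. -/
def lowStrip (ν : ℕ → ℕ) (m t c i : ℕ) : ℕ := min (ν i) (cap m t c i)

theorem lowStrip_lt (hm : 0 < m) (hq : 0 < ν (q + 1) → t ≤ q ∧ 0 < c) :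
    lowStrip ν m t c (q + 1) < m := by
  rcases Nat.eq_zero_or_pos (ν (q + 1)) with hzero | hpos
  · simpa [lowStrip, hzero] using hm
  · obtain ⟨htq, hc⟩ := hq hpos
    simp only [lowStrip, cap, show ¬q + 1 ≤ t by omega, ↓reduceIte]
    omega

namespace IsCut

theorem isStrip (hcut : IsCut b m ov ν t c) (hν : Antitone ν) (hm : m ≤ ν 0) :
    IsStrip ν (lowStrip ν m t c) m where
  zero := by simp [lowStrip, cap, hm]
  antitone := hν.min (antitone_cap m t c)
  gap i := by
    have := hν (Nat.le_add_right i 1)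
    have := hcut.room
    simp only [lowStrip, cap]
    rcases lt_trichotomy i t with hlt | rfl | hgt
    · simp only [hlt.le, Nat.succ_le_of_lt hlt, ↓reduceIte]
      omega
    · simp only [le_rfl, Nat.not_succ_le_self, ↓reduceIte]
      omega
    · simp only [Nat.not_le.2 hgt, Nat.not_le.2 (hgt.trans (Nat.lt_succ_self i)), ↓reduceIte]
      omega
  le i := min_le_left _ _

theorem lowStrip_length (hcut : IsCut b m ov ν t c) : lowStrip ν m t c b.length = ν b.length := by
  refine min_eq_left ?_
  rcases Nat.eq_zero_or_pos (ν b.length) with hzero | hpos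
  · omega
  · simpa using hcut.tail_le b.length le_rfl hpos

theorem tail_le_add_lowStrip (hcut : IsCut b m ov ν t c) (h : Fits (b ++ [m]) ov ν)
    (hb : ∀ x ∈ b, m ≤ x) {i : ℕ} (hi : i ≤ b.length) :
    ∑ j ∈ Finset.Ico i (b.length + 1), ν j ≤ (b.drop i).sum + lowStrip ν m t c i := by
  have hsplit := Finset.sum_eq_sum_Ico_succ_bot (show i < b.length + 1 by omega) ν
  have hsucc := h.tail_succ_le hb hi
  rcases Nat.eq_zero_or_pos (ν i) with hzero | hpos
  · omega
  · have := hcut.tail_le i hi hpos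
    simp only [lowStrip]
    omega

theorem residual_row_le (hcut : IsCut b m ov ν t c) (hν : Antitone ν) (hm : m ≤ ν 0)
    (h2 : 2 ≤ m) (hb : ∀ x ∈ b, m ≤ x) {i : ℕ} (hi : i < b.length) :
    residual ν (lowStrip ν m t c) i + overlapCount ov b.length i ≤ (b.drop i).sum := by
  have hres := (hcut.isStrip hν hm).residual_add i
  have hle := (hcut.isStrip hν hm).residual_le i
  rcases Nat.eq_zero_or_pos (ν (i + 1)) with hzero | hpos
  · have hroom := add_two_mul_overlapCount_le h2 hb ov hi
    have hrow := hcut.last_row_le i hi hzero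
    simp only [lowStrip, hzero, zero_min, add_zero] at hres
    omega
  · have hrow := hcut.row_le i hi hpos
    split_ifs at hrow with hit
    · subst hit
      have hroom := hcut.room
      have := hcut.add_le
      simp only [lowStrip, cap, le_rfl, Nat.not_succ_le_self, ↓reduceIte] at hres
      omega
    · omega

theorem fits_residual (hcut : IsCut b m ov ν t c) (h : Fits (b ++ [m]) ov ν) (h2 : 2 ≤ m)
    (hb : ∀ x ∈ b, m ≤ x) : Fits b ov (residual ν (lowStrip ν m t c)) := by
  have hm := h.le_apply_zero hb
  have he := hcut.isStrip h.antitone hm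
  have hlast := hcut.lowStrip_length
  have hzero : ν (b.length + 1) = 0 := h.eq_zero_of_le (by simp)
  have hsum (i : ℕ) (hi : i ≤ b.length) :
      ∑ j ∈ Finset.Ico i b.length, residual ν (lowStrip ν m t c) j + lowStrip ν m t c i
        = ∑ j ∈ Finset.Ico i (b.length + 1), ν j := by
    rw [he.sum_residual_add hi, hlast, Finset.sum_Ico_succ_top hi]
  refine ⟨he.antitone_residual, ?_, ?_, fun i hi => ?_,
    fun i hi => hcut.residual_row_le h.antitone hm h2 hb hi⟩
  · have := he.residual_add b.length
    have := he.le (b.length + 1)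
    omega
  · have hall := h.sum_eq
    simp only [List.length_append, List.length_singleton, List.sum_append, List.sum_singleton]
      at hall
    have := hsum 0 (Nat.zero_le _)
    have := he.zero
    omega
  · have := hsum i hi
    have := hcut.tail_le_add_lowStrip h hb hi
    omega

theorem lowStrip_pos (hcut : IsCut b m ov ν t c) (hm : 0 < m) (hov : ov (b.length - 1) = true)
    {i : ℕ} (hi : 0 < ν i) : 0 < lowStrip ν m t c i := by
  have hadd := hcut.add_le
  rw [hov, Bool.toNat_true] at hadd
  refine lt_min hi ?_
  simp only [cap]
  split_ifs <;> omega

theorem lastLetterCond_residual (hcut : IsCut b m ov ν t c) (h : Fits (b ++ [m]) ov ν)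
    (h2 : 2 ≤ m) (hb : ∀ x ∈ b, m ≤ x) (hov : ov (b.length - 1) = true) {r : ℕ}
    (hrpos : 0 < ν (r + 1)) (hr : ν (r + 2) = 0) :
    LastLetterCond b ov (residual ν (lowStrip ν m t c)) r := by
  have he := hcut.isStrip h.antitone (h.le_apply_zero hb)
  have hres := he.residual_add (r + 1)
  have hend : lowStrip ν m t c (r + 1 + 1) = 0 := Nat.eq_zero_of_le_zero (hr ▸ he.le (r + 2))
  have hpos := hcut.lowStrip_pos (by omega) hov hrpos
  refine ⟨Nat.eq_zero_of_le_zero (hr ▸ he.residual_le (r + 2)), fun _ => ?_, fun hrest => ?_⟩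
  · have := he.le_residual r
    omega
  · have hlt : r + 1 < b.length := by
      by_contra hcon
      have := (hcut.fits_residual h h2 hb).eq_zero_of_le (show b.length ≤ r + 1 by omega)
      omega
    have hrow := hcut.last_row_le (r + 1) hlt hr
    rw [hov, Bool.toNat_true] at hrow
    have hmin : lowStrip ν m t c (r + 1) = min (ν (r + 1)) (cap m t c (r + 1)) := rfl
    omega

end IsCut

theorem Fits.lastLetterCond_length {a : List ℕ} (h : Fits a ov ν) :
    LastLetterCond a ov ν a.length := by
  have hzero := h.eq_zero_of_le (Nat.le_succ a.length)
  exact ⟨h.eq_zero_of_le (by omega), fun hpos => absurd hzero hpos.ne',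
    fun hpos => absurd hzero hpos.ne'⟩

theorem Fits.exists_isStrip (h : Fits (b ++ [m]) ov ν) (h2 : 2 ≤ m) (hb : ∀ x ∈ b, m ≤ x)
    (hq : LastLetterCond (b ++ [m]) ov ν q) :
    ∃ e q', IsStrip ν e m ∧ e (q + 1) < m ∧ Fits b ov (residual ν e) ∧
      LastLetterCond b ov (residual ν e) q' ∧
      (b ≠ [] → ov (b.length - 1) = true → ∃ j > q', e (j + 1) < e j) := by
  obtain ⟨t, c, hcut, hbound⟩ := h.exists_isCut h2 hb hq
  have hm := h.le_apply_zero hb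
  have h0 : 0 < ν 0 := by omega
  have he := hcut.isStrip h.antitone hm
  have hfits := hcut.fits_residual h h2 hb
  have hlt : lowStrip ν m t c (q + 1) < m := lowStrip_lt (by omega) hbound
  by_cases hlast : b ≠ [] ∧ ov (b.length - 1) = true
  · obtain ⟨hne, hov⟩ := hlast
    obtain ⟨r, hpos, hzero⟩ := h.exists_last_row h0
    obtain ⟨r, rfl⟩ := Nat.exists_eq_succ_of_ne_zero (h.last_row_pos hne hov hzero).ne'
    have hnext : lowStrip ν m t c (r + 2) = 0 := Nat.eq_zero_of_le_zero (hzero ▸ he.le (r + 2))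
    exact ⟨_, r, he, hlt, hfits, hcut.lastLetterCond_residual h h2 hb hov hpos hzero,
      fun _ _ => ⟨r + 1, Nat.lt_succ_self r, hnext ▸ hcut.lowStrip_pos (by omega) hov hpos⟩⟩
  · exact ⟨_, _, he, hlt, hfits, hfits.lastLetterCond_length,
      fun hne hov => absurd ⟨hne, hov⟩ hlast⟩

end CutStrip

/-! ### Words -/

theorem le_getD_zero_of_mem {l : List ℕ} (hl : l.Pairwise (· ≥ ·)) {x : ℕ} (hx : x ∈ l) :
    x ≤ l.getD 0 0 := by
  obtain ⟨i, -, rfl⟩ := exists_getD_eq_of_mem hx 0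
  exact antitone_getD_of_pairwise_ge hl (Nat.zero_le i)

theorem getD_length_sub_one_le_of_mem {l : List ℕ} (hl : l.Pairwise (· ≥ ·)) {x : ℕ}
    (hx : x ∈ l) : l.getD (l.length - 1) 0 ≤ x := by
  obtain ⟨i, hi, rfl⟩ := exists_getD_eq_of_mem hx 0
  exact antitone_getD_of_pairwise_ge hl (Nat.le_sub_one_of_lt hi)

theorem getD_length_sub_one_append {X : Type*} (w : List X) {u : List X} (hu : u ≠ []) (x : X) :
    (w ++ u).getD ((w ++ u).length - 1) x = u.getD (u.length - 1) x := by
  have hpos := List.length_pos_iff.2 hu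
  rw [List.length_append, Nat.add_sub_assoc hpos,
    List.getD_append_right _ _ _ _ (Nat.le_add_right _ _), Nat.add_sub_cancel_left]

/-- The reading word of a row of the ribbon whose entries record, by their (1-based) row in the
content, the boxes of the strip `e` in the first `n` rows. -/
def stripWord (e : ℕ → ℕ) : ℕ → List ℕ
  | 0 => []
  | n + 1 => List.replicate (e n - e (n + 1)) (n + 1) ++ stripWord e n

section StripWord

variable {e : ℕ → ℕ}

theorem mem_stripWord {n x : ℕ} : x ∈ stripWord e n ↔ ∃ i < n, e (i + 1) < e i ∧ i + 1 = x := by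
  induction n with
  | zero => simp [stripWord]
  | succ n ih =>
    simp only [stripWord, List.mem_append, List.mem_replicate, ih, Nat.lt_succ_iff_lt_or_eq]
    grind

theorem pairwise_stripWord (e : ℕ → ℕ) (n : ℕ) : (stripWord e n).Pairwise (· ≥ ·) := by
  induction n with
  | zero => exact List.Pairwise.nil
  | succ n ih =>
    refine List.pairwise_append.2 ⟨List.pairwise_replicate.2 (Or.inr le_rfl), ih, ?_⟩
    intro x hx y hy
    obtain ⟨i, hi, -, rfl⟩ := mem_stripWord.1 hy
    rw [List.eq_of_mem_replicate hx]
    omega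

theorem length_stripWord_add (he : Antitone e) (n : ℕ) : (stripWord e n).length + e n = e 0 := by
  induction n with
  | zero => simp [stripWord]
  | succ n ih =>
    have := he (Nat.le_add_right n 1)
    simp only [stripWord, List.length_append, List.length_replicate]
    omega

theorem count_succ_stripWord (e : ℕ → ℕ) (n j : ℕ) :
    (stripWord e n).count (j + 1) = if j < n then e j - e (j + 1) else 0 := by
  induction n with
  | zero => simp [stripWord]
  | succ n ih =>
    rw [stripWord, List.count_append, ih, List.count_replicate]
    grind

theorem count_zero_stripWord (e : ℕ → ℕ) (n : ℕ) : (stripWord e n).count 0 = 0 :=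
  List.count_eq_zero.2 fun h => by
    obtain ⟨i, -, -, h⟩ := mem_stripWord.1 h
    exact Nat.succ_ne_zero i h

theorem last_stripWord_le {n q : ℕ} (hq : e (q + 1) < e 0) (hn : e n = 0) (he : Antitone e) :
    (stripWord e n).getD ((stripWord e n).length - 1) 0 ≤ q + 1 := by
  obtain ⟨i, hi, hlt⟩ : ∃ i ≤ q, e (i + 1) < e i := by
    by_contra! hcon
    have hconst : ∀ i ≤ q + 1, e 0 ≤ e i := by
      intro i
      induction i with
      | zero => exact fun _ => le_rfl
      | succ i ih => exact fun hi => (ih (by omega)).trans (hcon i (by omega))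
    exact hq.not_ge (hconst (q + 1) le_rfl)
  have hin : i < n := by
    by_contra hcon
    have := he (not_lt.1 hcon)
    omega
  exact (getD_length_sub_one_le_of_mem (pairwise_stripWord e n)
    (mem_stripWord.2 ⟨i, hin, hlt, rfl⟩)).trans (by omega)

theorem lt_head_stripWord {n q : ℕ} (hn : e n = 0) (he : Antitone e)
    (h : ∃ j > q, e (j + 1) < e j) : q + 1 < (stripWord e n).getD 0 0 := by
  obtain ⟨j, hj, hlt⟩ := h
  have hjn : j < n := by
    by_contra hcon
    have := he (not_lt.1 hcon)
    omega
  exact (Nat.succ_lt_succ hj).trans_le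
    (le_getD_zero_of_mem (pairwise_stripWord e n) (mem_stripWord.2 ⟨j, hjn, hlt, rfl⟩))

end StripWord

theorem IsYam.append {w u : List ℕ} (hw : IsYam w)
    (hu : ∀ j, (w ++ u).count (j + 2) ≤ w.count (j + 1)) : IsYam (w ++ u) := by
  intro k j
  rw [List.take_append]
  rcases Nat.lt_or_ge k w.length with hk | hk
  · simpa [Nat.sub_eq_zero_of_le hk.le] using hw k j
  · rw [List.take_of_length_le hk]
    calc (w ++ u.take (k - w.length)).count (j + 2)
        ≤ (w ++ u).count (j + 2) :=
          ((List.take_sublist _ u).append_left w).count_le _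
      _ ≤ w.count (j + 1) := hu j
      _ ≤ (w ++ u.take (k - w.length)).count (j + 1) :=
          (List.sublist_append_left _ _).count_le _

theorem IsRibbonWord.append_row {b : List ℕ} {ov : ℕ → Bool} {w u : List ℕ}
    (hw : IsRibbonWord b ov w) (hb : ∀ x ∈ b, 0 < x) (hu : u.Pairwise (· ≥ ·))
    (hcol : b ≠ [] → ov (b.length - 1) = true → w.getD (w.length - 1) 0 < u.getD 0 0) :
    IsRibbonWord (b ++ [u.length]) ov (w ++ u) := by
  obtain ⟨hlen, hrow, hgap⟩ := hw
  have hoff : ∀ i ≤ b.length, rowOffset (b ++ [u.length]) i = rowOffset b i := fun i hi => by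
    rw [rowOffset, List.take_append_of_le_length hi, rowOffset]
  have hofflast : rowOffset b b.length = w.length := by rw [rowOffset, List.take_length, hlen]
  have hleft : ∀ k < w.length, (w ++ u).getD k 0 = w.getD k 0 := fun k hk =>
    List.getD_append _ _ _ _ hk
  have hright : ∀ k, (w ++ u).getD (w.length + k) 0 = u.getD k 0 := fun k => by
    rw [List.getD_append_right _ _ _ _ (Nat.le_add_right _ _), Nat.add_sub_cancel_left]
  refine ⟨by simp [hlen], fun i j hi hj => ?_, fun i hi hov => ?_⟩
  · rw [List.length_append, List.length_singleton, Nat.lt_succ_iff_lt_or_eq] at hi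
    rcases hi with hi | rfl
    · rw [List.getD_append _ _ _ _ hi] at hj
      have hin : rowOffset b i + b.getD i 0 ≤ w.length := by
        have := List.sum_take_add_sum_drop b i
        have := sum_drop_eq_getD_add b i
        simp only [rowOffset]
        omega
      rw [hoff i hi.le, hleft _ (by omega), hleft _ (by omega)]
      exact hrow i j hi hj
    · rw [hoff _ le_rfl, hofflast, add_assoc, hright, hright]
      exact antitone_getD_of_pairwise_ge hu (Nat.le_succ j)
  · rw [List.length_append, List.length_singleton, Nat.succ_lt_succ_iff] at hi
    have hb0 : b ≠ [] := List.length_pos_iff.1 (Nat.zero_lt_of_lt hi)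
    rw [hoff (i + 1) hi]
    rcases (show i + 1 ≤ b.length from hi).lt_or_eq with hlt | heq
    · have hin : rowOffset b (i + 1) < w.length := hlen ▸ sum_take_lt_sum hb hlt
      rw [hleft _ (by omega), hleft _ hin]
      exact hgap i hlt hov
    · have hpos : 0 < w.length := hlen ▸ List.sum_pos b hb hb0
      obtain rfl : i = b.length - 1 := by omega
      rw [heq, hofflast, hleft _ (by omega), ← Nat.add_zero w.length, hright]
      exact hcol hb0 hov

/-- The reading words of the Littlewood–Richardson fillings with content `ν` (0-based) of the
ribbon with row lengths `a` and gap pattern `ov`. -/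
structure IsLRWord (a : List ℕ) (ov : ℕ → Bool) (ν : ℕ → ℕ) (w : List ℕ) : Prop where
  isRibbonWord : IsRibbonWord a ov w
  isYam : IsYam w
  count_succ : ∀ j, w.count (j + 1) = ν j
  count_zero : w.count 0 = 0

theorem IsLRWord.append_strip {b : List ℕ} {m : ℕ} {ov : ℕ → Bool} {ν e : ℕ → ℕ} {n : ℕ}
    {w : List ℕ} (hw : IsLRWord b ov (residual ν e) w) (hb : ∀ x ∈ b, 0 < x)
    (he : IsStrip ν e m) (hn : e n = 0)
    (hcol : b ≠ [] → ov (b.length - 1) = true →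
      w.getD (w.length - 1) 0 < (stripWord e n).getD 0 0) :
    IsLRWord (b ++ [m]) ov ν (w ++ stripWord e n) := by
  have hlen : (stripWord e n).length = m := by
    have := length_stripWord_add he.antitone n
    have := he.zero
    omega
  have hcount : ∀ j, (w ++ stripWord e n).count (j + 1) = ν j := fun j => by
    have hres := he.residual_add j
    have hanti := he.antitone (Nat.le_add_right j 1)
    rw [List.count_append, hw.count_succ, count_succ_stripWord]
    split_ifs with hj
    · omega
    · have := he.antitone (not_lt.1 hj)
      omega
  refine ⟨hlen ▸ hw.isRibbonWord.append_row hb (pairwise_stripWord e n) hcol,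
    hw.isYam.append fun j => ?_, hcount, ?_⟩
  · rw [hcount, hw.count_succ]
    exact he.le_residual j
  · rw [List.count_append, hw.count_zero, count_zero_stripWord]

/-! ### Existence of fillings -/

theorem isLRWord_nil (ov : ℕ → Bool) {ν : ℕ → ℕ} (hν : ∀ j, ν j = 0) : IsLRWord [] ov ν [] where
  isRibbonWord := ⟨rfl, fun _ _ hi => absurd hi (Nat.not_lt_zero _),
    fun _ hi => absurd hi (Nat.not_lt_zero _)⟩
  isYam k j := by simp
  count_succ j := (hν j).symm
  count_zero := rfl

theorem Fits.exists_isLRWord {a : List ℕ} {ov : ℕ → Bool} (h2 : PartsGE a 2)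
    (ha : a.Pairwise (· ≥ ·)) {ν : ℕ → ℕ} {q : ℕ} (h : Fits a ov ν)
    (hq : LastLetterCond a ov ν q) :
    ∃ w, IsLRWord a ov ν w ∧ w.getD (w.length - 1) 0 ≤ q + 1 := by
  induction a using List.reverseRecOn generalizing ν q with
  | nil => exact ⟨[], isLRWord_nil ov fun j => h.eq_zero_of_le (Nat.zero_le j), Nat.zero_le _⟩
  | append_singleton b m ih =>
    obtain ⟨hbpair, -, hbm⟩ := List.pairwise_append.1 ha
    have hb : ∀ x ∈ b, m ≤ x := fun x hx => hbm x hx m (List.mem_singleton_self m)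
    have hb2 : PartsGE b 2 := fun x hx => h2 x (List.mem_append_left _ hx)
    have hm2 : 2 ≤ m := h2 m (List.mem_append_right _ (List.mem_singleton_self m))
    obtain ⟨e, q', he, hlt, hfits, hq', hcol⟩ := h.exists_isStrip hm2 hb hq
    obtain ⟨w, hw, hlast⟩ := ih hb2 hbpair hfits hq'
    have hzero : ν (b.length + 1) = 0 := h.eq_zero_of_le (by simp)
    have hn : e (b.length + 1) = 0 := Nat.eq_zero_of_le_zero (hzero ▸ he.le (b.length + 1))
    have hlen := length_stripWord_add he.antitone (b.length + 1)
    have he0 := he.zero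
    refine ⟨w ++ stripWord e (b.length + 1),
      hw.append_strip (fun x hx => two_pos.trans_le (hb2 x hx)) he hn fun hne hov =>
        hlast.trans_lt (lt_head_stripWord hn he.antitone (hcol hne hov)), ?_⟩
    rw [getD_length_sub_one_append w (List.ne_nil_of_length_pos (by omega))]
    exact last_stripWord_le (he0 ▸ hlt) hn he.antitone

theorem fits_of_domLE {a p nu : List ℕ} (hp : IsOverlapSeq a p)
    (hnu : IsPartition nu) (hdom : DomLE a nu)
    (hineq : ∀ i, i < a.length → nu.getD i 0 + p.getD i 0 ≤ (a.drop i).sum) :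
    Fits a (ovOf p) (nu.getD · 0) := by
  obtain ⟨hsum, htake⟩ := hdom
  have htail (i : ℕ) : (nu.drop i).sum ≤ (a.drop i).sum := by
    have := List.sum_take_add_sum_drop a i
    have := List.sum_take_add_sum_drop nu i
    have := htake i
    omega
  have hzero : nu.getD a.length 0 = 0 := by
    have hle := htail a.length
    have := sum_drop_eq_getD_add nu a.length
    rw [List.drop_length, List.sum_nil] at hle
    omega
  have hlen : nu.length ≤ a.length := by
    by_contra! hlt
    exact (hnu.2 _ (getD_mem hlt 0)).ne' hzero
  refine ⟨antitone_getD_of_pairwise_ge hnu.1, hzero, ?_, fun i _ => ?_, fun i hi => ?_⟩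
  · rw [sum_Ico_getD nu hlen, List.drop_zero, hsum]
  · rw [sum_Ico_getD nu hlen]
    exact htail i
  · rw [← hp.getD_eq_overlapCount hi]
    exact hineq i hi

theorem sufficiency_for_positivity_general (a p nu : List ℕ) (ha : IsPartition a)
    (h2 : PartsGE a 2) (hp : IsOverlapSeq a p) (hnu : IsPartition nu) (hdom : DomLE a nu)
    (hineq : ∀ i, i < a.length → nu.getD i 0 + p.getD i 0 ≤ (a.drop i).sum) :
    InSupport a p nu := by
  have hfits := fits_of_domLE hp hnu hdom hineq
  obtain ⟨w, hw, -⟩ := hfits.exists_isLRWord h2 ha.1 hfits.lastLetterCond_length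
  exact ⟨w, hw.isRibbonWord, hw.isYam, hw.count_succ, hw.count_zero⟩

/-- Theorem `ThmSuf`: let `a` be a partition with parts ≥ 2 and overlapping
partition `p`, and let `nu ∈ [a, (|a|−p₁, p₁)]` be a partition with `ℓ(nu) = ℓ(a) − k` for
some `1 ≤ k ≤ ℓ(a)−2`, satisfying `ν_i ≤ Σ_{j=i}^{ℓ(a)} a_j − p_i` for all `1 ≤ i ≤ ℓ(a)`.
Then `c_{R_a^p}^{nu} > 0`. -/
theorem sufficiency_for_positivity
    (a p nu : List ℕ) (ha : IsPartition a) (h2 : PartsGE a 2)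
    (hp : IsOverlapSeq a p) (hnu : IsPartition nu) (k : ℕ)
    (hk1 : 1 ≤ k) (hk2 : k ≤ a.length - 2) (hlen : nu.length = a.length - k)
    (hint : InInterval a p nu)
    (hineq : ∀ i, i < a.length → nu.getD i 0 + p.getD i 0 ≤ (a.drop i).sum) :
    InSupport a p nu :=
  sufficiency_for_positivity_general a p nu ha h2 hp hnu hint.1 hineq

end RibbonSupport
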